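/- For every n ≥ 1, there is a bijection between the set of labeled planar binary trees with n leaves avoiding the two patterns y(*, y(*,*)) and y(*, x(*, x(*,*))), and the set of labeled planar binary trees with n leaves avoiding the single pattern y(*, x(*,*)). -/

import Mathlib

/-!
Read along a right spine, the labels of an L-normal tree form a word `x^a y^b`, and those of a
Flex-normal tree a word `x^a yxyx⋯`. Cutting a word from the left into blocks `x`, `yx`, `yy` (and
possibly a last `y`) and exchanging `yx` with `yy` is an involution that turns one kind of word into
the other. Applied to all right spines of a tree, it is an involution of the set of all trees that
preserves the number of leaves and exchanges the two avoidance conditions.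
-/

/-- Planar binary trees with internal vertices labeled by one of two symbols `x`, `y`. -/
inductive LTree : Type
  | leaf : LTree
  | x : LTree → LTree → LTree
  | y : LTree → LTree → LTree

namespace LTree

/-- Number of leaves. -/
def leaves : LTree → ℕ
  | leaf => 1
  | x u v => u.leaves + v.leaves
  | y u v => u.leaves + v.leaves

/-- The subtree relation. -/
inductive Subtree : LTree → LTree → Prop
  | refl (t : LTree) : Subtree t t
  | xl {s u v : LTree} : Subtree s u → Subtree s (x u v)
  | xr {s u v : LTree} : Subtree s v → Subtree s (x u v)
  | yl {s u v : LTree} : Subtree s u → Subtree s (y u v)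
  | yr {s u v : LTree} : Subtree s v → Subtree s (y u v)

/-- A tree matches (at the root) one of the two forbidden patterns
`y(*, y(*,*))` and `y(*, x(*, x(*,*)))` of noncom-Flex. -/
def IsBadFlex : LTree → Prop
  | y _ (y _ _) => True
  | y _ (x _ (x _ _)) => True
  | _ => False

/-- A tree avoids the two noncom-Flex patterns. -/
def AvoidsFlex (t : LTree) : Prop := ∀ s : LTree, Subtree s t → ¬ IsBadFlex s

/-- A tree matches (at the root) the single forbidden pattern `y(*, x(*,*))`
of the L-operad of Leroux. -/
def IsBadL : LTree → Prop
  | y _ (x _ _) => True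
  | _ => False

/-- A tree avoids the single pattern `y(*, x(*,*))`. -/
def AvoidsL (t : LTree) : Prop := ∀ s : LTree, Subtree s t → ¬ IsBadL s

end LTree

namespace LTree

variable {s u v w : LTree}

theorem subtree_leaf_iff : Subtree s leaf ↔ s = leaf := by
  constructor
  · rintro ⟨⟩
    rfl
  · rintro rfl
    exact .refl _

theorem subtree_x_iff : Subtree s (x u v) ↔ s = x u v ∨ Subtree s u ∨ Subtree s v := by
  constructor
  · intro h
    cases h with
    | refl => exact .inl rfl
    | xl h => exact .inr (.inl h)
    | xr h => exact .inr (.inr h)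
  · rintro (rfl | h | h)
    exacts [.refl _, .xl h, .xr h]

theorem subtree_y_iff : Subtree s (y u v) ↔ s = y u v ∨ Subtree s u ∨ Subtree s v := by
  constructor
  · intro h
    cases h with
    | refl => exact .inl rfl
    | yl h => exact .inr (.inl h)
    | yr h => exact .inr (.inr h)
  · rintro (rfl | h | h)
    exacts [.refl _, .yl h, .yr h]

/-- The root of the tree is an internal vertex labeled `x`. Both avoidance conditions restrict
which right subtrees may have such a root. -/
def HasRootX : LTree → Prop
  | x _ _ => True
  | _ => False

theorem isBadL_y_iff : IsBadL (y u v) ↔ HasRootX v := by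
  cases v <;> rfl

theorem isBadFlex_y_x_iff : IsBadFlex (y u (x v w)) ↔ HasRootX w := by
  cases w <;> rfl

theorem avoidsL_leaf : AvoidsL leaf := by
  simp [AvoidsL, subtree_leaf_iff, IsBadL]

theorem avoidsL_x_iff : AvoidsL (x u v) ↔ AvoidsL u ∧ AvoidsL v := by
  simp [AvoidsL, subtree_x_iff, or_imp, forall_and, IsBadL]

theorem avoidsL_y_iff : AvoidsL (y u v) ↔ ¬ HasRootX v ∧ AvoidsL u ∧ AvoidsL v := by
  simp [AvoidsL, subtree_y_iff, or_imp, forall_and, isBadL_y_iff]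

theorem avoidsFlex_leaf : AvoidsFlex leaf := by
  simp [AvoidsFlex, subtree_leaf_iff, IsBadFlex]

theorem avoidsFlex_x_iff : AvoidsFlex (x u v) ↔ AvoidsFlex u ∧ AvoidsFlex v := by
  simp [AvoidsFlex, subtree_x_iff, or_imp, forall_and, IsBadFlex]

theorem avoidsFlex_y_iff :
    AvoidsFlex (y u v) ↔ ¬ IsBadFlex (y u v) ∧ AvoidsFlex u ∧ AvoidsFlex v := by
  simp [AvoidsFlex, subtree_y_iff, or_imp, forall_and]

theorem avoidsFlex_y_leaf_iff : AvoidsFlex (y u leaf) ↔ AvoidsFlex u := by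
  simp [avoidsFlex_y_iff, IsBadFlex, avoidsFlex_leaf]

theorem avoidsFlex_y_x_iff :
    AvoidsFlex (y u (x v w)) ↔ ¬ HasRootX w ∧ AvoidsFlex u ∧ AvoidsFlex v ∧ AvoidsFlex w := by
  rw [avoidsFlex_y_iff, isBadFlex_y_x_iff, avoidsFlex_x_iff]

theorem not_avoidsFlex_y_y : ¬ AvoidsFlex (y u (y v w)) :=
  fun h => h _ (.refl _) trivial

/-- The spine involution, which relates Flex-normal and L-normal trees: below a vertex labeled `y`,
the label of the right child is exchanged. A child treated in this way, even if labeled `y`,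
triggers no exchange at its own right child. -/
def flipBelowY : LTree → LTree
  | leaf => leaf
  | x u v => x (flipBelowY u) (flipBelowY v)
  | y u leaf => y (flipBelowY u) leaf
  | y u (x v w) => y (flipBelowY u) (y (flipBelowY v) (flipBelowY w))
  | y u (y v w) => y (flipBelowY u) (x (flipBelowY v) (flipBelowY w))

theorem flipBelowY_involutive : Function.Involutive flipBelowY := by
  intro t
  fun_induction flipBelowY t <;> simp_all [flipBelowY]

theorem leaves_flipBelowY (t : LTree) : (flipBelowY t).leaves = t.leaves := by
  fun_induction flipBelowY t <;> simp_all [leaves]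

theorem hasRootX_flipBelowY_iff (t : LTree) : HasRootX (flipBelowY t) ↔ HasRootX t := by
  fun_cases flipBelowY t <;> rfl

theorem avoidsL_flipBelowY_iff (t : LTree) : AvoidsL (flipBelowY t) ↔ AvoidsFlex t := by
  fun_induction flipBelowY t with
  | case1 => exact iff_of_true avoidsL_leaf avoidsFlex_leaf
  | case2 u v ihu ihv => rw [avoidsL_x_iff, avoidsFlex_x_iff, ihu, ihv]
  | case3 u ihu => simp [avoidsL_y_iff, HasRootX, avoidsL_leaf, avoidsFlex_y_leaf_iff, ihu]
  | case4 u v w ihu ihv ihw =>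
    calc AvoidsL (y (flipBelowY u) (y (flipBelowY v) (flipBelowY w)))
      _ ↔ AvoidsL (flipBelowY u) ∧
          ¬ HasRootX (flipBelowY w) ∧ AvoidsL (flipBelowY v) ∧ AvoidsL (flipBelowY w) := by
        simp [avoidsL_y_iff, HasRootX]
      _ ↔ AvoidsFlex u ∧ ¬ HasRootX w ∧ AvoidsFlex v ∧ AvoidsFlex w := by
        rw [hasRootX_flipBelowY_iff, ihu, ihv, ihw]
      _ ↔ AvoidsFlex (y u (x v w)) := by
        rw [avoidsFlex_y_x_iff, and_left_comm]
  | case5 u v w =>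
    exact iff_of_false (fun h => (avoidsL_y_iff.mp h).1 trivial) not_avoidsFlex_y_y

end LTree

open LTree in
/-- For every `n ≥ 1` there is a bijection between labeled planar binary trees with
`n` leaves avoiding `y(*, y(*,*))` and `y(*, x(*, x(*,*)))` (normal monomials of
noncom-Flex) and those avoiding the single pattern `y(*, x(*,*))` (normal monomials
of the L-operad of Leroux). -/
theorem noncomFlex_bijection_with_L_operad :
    ∀ n : ℕ, 1 ≤ n →
      Nonempty ({t : LTree // t.leaves = n ∧ AvoidsFlex t} ≃
                {t : LTree // t.leaves = n ∧ AvoidsL t}) := by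
  intro n _
  exact ⟨flipBelowY_involutive.toPerm.subtypeEquiv fun t =>
    and_congr (by rw [Function.Involutive.coe_toPerm, leaves_flipBelowY])
      (avoidsL_flipBelowY_iff t).symm⟩
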